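/- arXiv:2401.04442 — 6 statements merged into one kernel-verified Lean document; each statement's English description precedes it below -/
import Mathlib

section
/- Let m ≥ 1, let s, t : {1,…,m} → ℕ, and let M be an m × m matrix with entries in the polynomial ring ℝ[X] such that: (i) for each i, deg M_{ii} = s_i + t_i; (ii) for all i, j with j > i, deg M_{ij} < s_i + t_j; (iii) for all i, j with j < i, deg M_{ij} ≤ s_i + t_j (here deg denotes the degree with deg 0 = ⊥, which is smaller than every natural number). Then deg(det M) = Σ_{i=1}^m (s_i + t_i), the leading coefficient of det M equals the product of the leading coefficients of the diagonal entries M_{ii}, and in particular det M ≠ 0 and there exists Λ ∈ ℝ such that for every real λ with |λ| > Λ the evaluated matrix (M_{ij}(λ)) is invertible. (This is the degree argument by which the paper produces the threshold N(k) beyond which the mode-decomposed elliptic systems, e.g. χ_k and ψ_k of Theorems 5.3 and 5.4 and the ADN systems of Appendix E, are uniquely solvable.) -/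
/-!
Give row `i` weight `s i` and column `j` weight `t j`. Every permutation uses each row and each
column once, so all terms of the Leibniz expansion of `det M` have the same degree bound
`∑ (s i + t i)`, and the coefficient of `det M` in that degree is the determinant of the scalar
matrix of the coefficients of `M i j` in degree `s i + t j`. Under the degree conditions this
scalar matrix is lower triangular with the leading coefficients of the `M i i` on its diagonal.
It is therefore nonsingular, and the evaluations of `M` are invertible away from the finitely many
roots of `det M`.
-/

section ADN

open Polynomial

theorem coeff_prod_sum_of_natDegree_le {R ι : Type*} [CommSemiring R] (S : Finset ι) (f : ι → R[X])
    (d : ι → ℕ) (h : ∀ i ∈ S, (f i).natDegree ≤ d i) :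
    (∏ i ∈ S, f i).coeff (∑ i ∈ S, d i) = ∏ i ∈ S, (f i).coeff (d i) := by
  induction S using Finset.cons_induction with
  | empty => simp only [Finset.prod_empty, Finset.sum_empty, coeff_one_zero]
  | cons a S ha ih =>
    have hS : ∀ i ∈ S, (f i).natDegree ≤ d i := fun i hi => h i (Finset.mem_cons_of_mem hi)
    have hprod : (∏ i ∈ S, f i).natDegree ≤ ∑ i ∈ S, d i :=
      (natDegree_prod_le S f).trans (Finset.sum_le_sum hS)
    rw [Finset.prod_cons, Finset.sum_cons, Finset.prod_cons,
      coeff_mul_add_eq_of_natDegree_le (h a (Finset.mem_cons_self a S)) hprod, ih hS]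

theorem sum_perm_add {ι A : Type*} [Fintype ι] [AddCommMonoid A] (σ : Equiv.Perm ι) (s t : ι → A) :
    ∑ i, (s (σ i) + t i) = ∑ i, (s i + t i) := by
  rw [Finset.sum_add_distrib, Finset.sum_add_distrib, Equiv.sum_comp σ s]

/-- The principal part, in the sense of Agmon–Douglis–Nirenberg, of a polynomial matrix with row
weights `s` and column weights `t`. It is encoded by its scalar coefficients: the entry `(i, j)` is
the coefficient of `X ^ (s i + t j)`, which is `0` when `M i j` has smaller degree. -/
def adnPrincipalPart {R m n : Type*} [Semiring R] (s : m → ℕ) (t : n → ℕ) (M : Matrix m n R[X]) :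
    Matrix m n R :=
  Matrix.of fun i j => (M i j).coeff (s i + t j)

section Det

variable {R ι : Type*} [CommRing R] [Fintype ι] {s t : ι → ℕ} {M : Matrix ι ι R[X]}

theorem natDegree_det_le_sum [DecidableEq ι] (hM : ∀ i j, (M i j).natDegree ≤ s i + t j) :
    M.det.natDegree ≤ ∑ i, (s i + t i) := by
  rw [Matrix.det_apply]
  refine natDegree_sum_le_of_forall_le _ _ fun σ _ => ?_
  calc
    (Equiv.Perm.sign σ • ∏ i, M (σ i) i).natDegree ≤ (∏ i, M (σ i) i).natDegree :=
      natDegree_smul_le _ _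
    _ ≤ ∑ i, (M (σ i) i).natDegree := natDegree_prod_le _ _
    _ ≤ ∑ i, (s (σ i) + t i) := Finset.sum_le_sum fun i _ => hM (σ i) i
    _ = ∑ i, (s i + t i) := sum_perm_add σ s t

theorem coeff_det_sum [DecidableEq ι] (hM : ∀ i j, (M i j).natDegree ≤ s i + t j) :
    M.det.coeff (∑ i, (s i + t i)) = (adnPrincipalPart s t M).det := by
  rw [Matrix.det_apply, Matrix.det_apply, finsetSum_coeff]
  refine Finset.sum_congr rfl fun σ _ => ?_
  rw [coeff_smul, ← sum_perm_add σ s t, coeff_prod_sum_of_natDegree_le _ _ _ fun i _ => hM (σ i) i]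
  rfl

theorem degree_det_of_det_adnPrincipalPart_ne_zero [DecidableEq ι]
    (hM : ∀ i j, (M i j).natDegree ≤ s i + t j) (hdet : (adnPrincipalPart s t M).det ≠ 0) :
    M.det.degree = ((∑ i, (s i + t i) : ℕ) : WithBot ℕ) :=
  degree_eq_of_le_of_coeff_ne_zero (degree_le_of_natDegree_le (natDegree_det_le_sum hM))
    ((coeff_det_sum hM).trans_ne hdet)

theorem leadingCoeff_det_of_det_adnPrincipalPart_ne_zero [DecidableEq ι]
    (hM : ∀ i j, (M i j).natDegree ≤ s i + t j) (hdet : (adnPrincipalPart s t M).det ≠ 0) :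
    M.det.leadingCoeff = (adnPrincipalPart s t M).det := by
  rw [leadingCoeff, natDegree_eq_of_degree_eq_some
    (degree_det_of_det_adnPrincipalPart_ne_zero hM hdet), coeff_det_sum hM]

theorem det_adnPrincipalPart_eq_prod_leadingCoeff [LinearOrder ι]
    (hdiag : ∀ i, (M i i).degree = ((s i + t i : ℕ) : WithBot ℕ))
    (hupper : ∀ i j, i < j → (M i j).degree < ((s i + t j : ℕ) : WithBot ℕ)) :
    (adnPrincipalPart s t M).det = ∏ i, (M i i).leadingCoeff := by
  have htri : (adnPrincipalPart s t M).IsLowerTriangular := fun i j hij =>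
    coeff_eq_zero_of_degree_lt (hupper i j hij)
  rw [Matrix.det_of_isLowerTriangular _ htri]
  refine Finset.prod_congr rfl fun i _ => ?_
  rw [leadingCoeff, natDegree_eq_of_degree_eq_some (hdiag i)]
  rfl

end Det

theorem isUnit_map_eval_iff {K ι : Type*} [Field K] [Fintype ι] [DecidableEq ι]
    {M : Matrix ι ι K[X]} {x : K} : IsUnit (M.map (eval x)) ↔ ¬M.det.IsRoot x := by
  have heval : (M.map (eval x)).det = M.det.eval x := ((evalRingHom x).map_det M).symm
  rw [Matrix.isUnit_iff_isUnit_det, isUnit_iff_ne_zero, heval, IsRoot.def]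

theorem exists_norm_bound_isUnit_map_eval {𝕜 ι : Type*} [NormedField 𝕜] [Fintype ι]
    [DecidableEq ι] {M : Matrix ι ι 𝕜[X]} (hM : M.det ≠ 0) :
    ∃ Λ : ℝ, ∀ lam : 𝕜, Λ < ‖lam‖ → IsUnit (M.map (eval lam)) := by
  obtain ⟨Λ, hΛ⟩ := (finite_setOfPred_isRoot hM).isBounded.exists_norm_le
  exact ⟨Λ, fun lam hlam => isUnit_map_eval_iff.2 fun hroot => (hΛ lam hroot).not_gt hlam⟩

theorem det_degree_of_ADN_matrix_general {𝕜 ι : Type*} [NormedField 𝕜] [Fintype ι] [LinearOrder ι]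
    (s t : ι → ℕ) (M : Matrix ι ι 𝕜[X])
    (hdiag : ∀ i, (M i i).degree = ((s i + t i : ℕ) : WithBot ℕ))
    (hupper : ∀ i j, i < j → (M i j).degree < ((s i + t j : ℕ) : WithBot ℕ))
    (hlower : ∀ i j, j < i → (M i j).degree ≤ ((s i + t j : ℕ) : WithBot ℕ)) :
    M.det.degree = ((∑ i, (s i + t i) : ℕ) : WithBot ℕ) ∧
    M.det.leadingCoeff = ∏ i, (M i i).leadingCoeff ∧
    M.det ≠ 0 ∧
    ∃ Λ : ℝ, ∀ lam : 𝕜, Λ < ‖lam‖ → IsUnit (M.map (eval lam)) := by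
  have hdeg : ∀ i j, (M i j).natDegree ≤ s i + t j := fun i j => by
    apply natDegree_le_of_degree_le
    rcases lt_trichotomy i j with hij | rfl | hij
    exacts [(hupper i j hij).le, (hdiag i).le, hlower i j hij]
  have hprincipal := det_adnPrincipalPart_eq_prod_leadingCoeff hdiag hupper
  have hdiag_ne : ∀ i, M i i ≠ 0 := fun i => degree_ne_bot.1 ((hdiag i).trans_ne WithBot.coe_ne_bot)
  have hprincipal_ne : (adnPrincipalPart s t M).det ≠ 0 :=
    hprincipal.trans_ne (Finset.prod_ne_zero_iff.2 fun i _ => leadingCoeff_ne_zero.2 (hdiag_ne i))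
  have hdegree := degree_det_of_det_adnPrincipalPart_ne_zero hdeg hprincipal_ne
  have hdet : M.det ≠ 0 := degree_ne_bot.1 (hdegree.trans_ne WithBot.coe_ne_bot)
  exact ⟨hdegree, (leadingCoeff_det_of_det_adnPrincipalPart_ne_zero hdeg hprincipal_ne).trans
    hprincipal, hdet, exists_norm_bound_isUnit_map_eval hdet⟩

end ADN

/-- Degree argument for Agmon–Douglis–Nirenberg type matrices of polynomials: if the
diagonal entries have degree exactly `s i + t i`, the entries above the diagonal have
strictly smaller degree than `s i + t j`, and the entries below the diagonal have degree
at most `s i + t j`, then the determinant has degree `∑ (s i + t i)`, its leading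
coefficient is the product of the leading coefficients of the diagonal entries, it is
nonzero, and the matrix evaluated at any real `λ` of sufficiently large absolute value
is invertible. -/
theorem det_degree_of_ADN_matrix (m : ℕ) (hm : 1 ≤ m)
    (s t : Fin m → ℕ) (M : Matrix (Fin m) (Fin m) (Polynomial ℝ))
    (hdiag : ∀ i, (M i i).degree = ((s i + t i : ℕ) : WithBot ℕ))
    (hupper : ∀ i j, i < j → (M i j).degree < ((s i + t j : ℕ) : WithBot ℕ))
    (hlower : ∀ i j, j < i → (M i j).degree ≤ ((s i + t j : ℕ) : WithBot ℕ)) :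
    M.det.degree = ((∑ i, (s i + t i) : ℕ) : WithBot ℕ) ∧
    M.det.leadingCoeff = ∏ i, (M i i).leadingCoeff ∧
    M.det ≠ 0 ∧
    ∃ Λ : ℝ, ∀ lam : ℝ, Λ < |lam| → IsUnit (M.map (Polynomial.eval lam)) :=
  det_degree_of_ADN_matrix_general s t M hdiag hupper hlower
end

section
/- Let d ≥ 2 be an integer and a a real number with a ≠ −2 and a·(d−1) ≠ −d. Let k ∈ ℝ^d be a nonzero vector and h a symmetric d × d real matrix with zero trace. If for all indices A, B ∈ {1,…,d} one has ‖k‖² h_{AB} + (a/2)·( k_A (hk)_B + k_B (hk)_A ) − (a/d)·⟨k, hk⟩·δ_{AB} = 0, then h = 0. (This is the principal-symbol injectivity established in Lemma D.1 of the paper: the operator L_{a,c} = aP + Δ + 2𝓡 + c acting on trace-free symmetric 2-tensors on an (n−1)-dimensional manifold, d = n−1, is elliptic whenever a ∉ {−2, (1−n)/(n−2)}.) -/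
/-!
Contracting the symbol `σ(h)` of a matrix `h` with `k` once and twice gives
`σ(h)k = (1 + α)‖k‖² hk + (α - β)⟨k, hk⟩ k` and `⟨k, σ(h)k⟩ = (1 + 2α - β)‖k‖²⟨k, hk⟩`.
If `σ(h) = 0`, the second identity yields `⟨k, hk⟩ = 0`, then the first yields `hk = 0`, and what
is left of `σ(h) = 0` is `‖k‖² h = 0`. For `α = a/2` and `β = a/d` the factors `1 + α` and
`1 + 2α - β` vanish exactly at the two excluded values of `a`.
-/

section TensorSymbol

open Matrix

variable {ι R : Type*} [Fintype ι] [DecidableEq ι] [CommRing R]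

/-- The principal symbol `h ↦ ‖k‖² h + α (k ⊗ hk + hk ⊗ k) - β ⟨k, hk⟩ 1` at the covector `k`,
acting on all square matrices. Independent coefficients `α`, `β` in place of `a/2`, `a/d` make it
meaningful over any commutative ring. -/
def tensorSymbol (α β : R) (k : ι → R) : Matrix ι ι R →ₗ[R] Matrix ι ι R where
  toFun h := (k ⬝ᵥ k) • h + α • (vecMulVec k (h *ᵥ k) + vecMulVec (h *ᵥ k) k)
    - (β * (k ⬝ᵥ h *ᵥ k)) • 1
  map_add' g h := by
    simp only [add_mulVec, vecMulVec_add, add_vecMulVec, dotProduct_add]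
    module
  map_smul' c h := by
    simp only [smul_mulVec, vecMulVec_smul, smul_vecMulVec, dotProduct_smul, smul_eq_mul,
      RingHom.id_apply]
    module

theorem tensorSymbol_apply (α β : R) (k : ι → R) (h : Matrix ι ι R) :
    tensorSymbol α β k h =
      (k ⬝ᵥ k) • h + α • (vecMulVec k (h *ᵥ k) + vecMulVec (h *ᵥ k) k)
        - (β * (k ⬝ᵥ h *ᵥ k)) • 1 :=
  rfl

theorem tensorSymbol_apply_apply (α β : R) (k : ι → R) (h : Matrix ι ι R) (A B : ι) :
    tensorSymbol α β k h A B =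
      (∑ i, k i ^ 2) * h A B
        + α * (k A * (∑ C, h B C * k C) + k B * (∑ C, h A C * k C))
        - β * (∑ C, ∑ E, k C * h C E * k E) * (if A = B then 1 else 0) := by
  simp only [tensorSymbol_apply, Matrix.sub_apply, Matrix.add_apply, Matrix.smul_apply,
    vecMulVec_apply, one_apply, mulVec, dotProduct, smul_eq_mul, Finset.mul_sum, mul_assoc, sq,
    mul_comm (k B)]

theorem tensorSymbol_mulVec_self (α β : R) (k : ι → R) (h : Matrix ι ι R) :
    tensorSymbol α β k h *ᵥ k =
      ((1 + α) * (k ⬝ᵥ k)) • (h *ᵥ k) + ((α - β) * (k ⬝ᵥ h *ᵥ k)) • k := by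
  simp only [tensorSymbol_apply, sub_mulVec, add_mulVec, smul_mulVec, vecMulVec_mulVec,
    one_mulVec, op_smul_eq_smul, dotProduct_comm (h *ᵥ k) k]
  module

theorem dotProduct_tensorSymbol_mulVec_self (α β : R) (k : ι → R) (h : Matrix ι ι R) :
    k ⬝ᵥ tensorSymbol α β k h *ᵥ k = (1 + 2 * α - β) * (k ⬝ᵥ k) * (k ⬝ᵥ h *ᵥ k) := by
  simp only [tensorSymbol_mulVec_self, dotProduct_add, dotProduct_smul, smul_eq_mul]
  ring

theorem tensor_symbol_injective_general [NoZeroDivisors R] {α β : R} {k : ι → R}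
    (hα : 1 + α ≠ 0) (hαβ : 1 + 2 * α - β ≠ 0) (hk : k ⬝ᵥ k ≠ 0) :
    Function.Injective (tensorSymbol α β k) := by
  rw [injective_iff_map_eq_zero]
  intro h hσ
  have quadratic_eq_zero : k ⬝ᵥ h *ᵥ k = 0 := by
    have contracted := dotProduct_tensorSymbol_mulVec_self α β k h
    rw [hσ, zero_mulVec, dotProduct_zero] at contracted
    exact (mul_eq_zero.mp contracted.symm).resolve_left (mul_ne_zero hαβ hk)
  have mulVec_eq_zero : h *ᵥ k = 0 := by
    have contracted := tensorSymbol_mulVec_self α β k h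
    rw [hσ, zero_mulVec, quadratic_eq_zero, mul_zero, zero_smul, add_zero] at contracted
    exact (smul_eq_zero.mp contracted.symm).resolve_left (mul_ne_zero hα hk)
  have remaining : (k ⬝ᵥ k) • h = 0 := by
    simpa [tensorSymbol_apply, mulVec_eq_zero] using hσ
  exact (smul_eq_zero.mp remaining).resolve_left hk

end TensorSymbol

/-- Principal-symbol injectivity of Lemma D.1: for `a ∉ {-2, -d/(d-1)}`, a nonzero
covector `k` and a symmetric trace-free matrix `h`, the vanishing of the principal
symbol `‖k‖² h_{AB} + (a/2)(k_A (hk)_B + k_B (hk)_A) - (a/d)⟨k,hk⟩ δ_{AB}` forces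
`h = 0`. -/
theorem tensor_symbol_injective (d : ℕ) (hd : 2 ≤ d) (a : ℝ)
    (ha1 : a ≠ -2) (ha2 : a * ((d : ℝ) - 1) ≠ -(d : ℝ))
    (k : Fin d → ℝ) (hk : k ≠ 0)
    (h : Matrix (Fin d) (Fin d) ℝ)
    (hsymm : ∀ A B, h A B = h B A)
    (htrace : ∑ A, h A A = 0)
    (heq : ∀ A B, (∑ i, (k i) ^ 2) * h A B
        + (a / 2) * (k A * (∑ C, h B C * k C) + k B * (∑ C, h A C * k C))
        - (a / (d : ℝ)) * (∑ C, ∑ E, k C * h C E * k E) * (if A = B then (1 : ℝ) else 0)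
        = 0) :
    h = 0 := by
  have hd0 : (d : ℝ) ≠ 0 := Nat.cast_ne_zero.mpr (by omega)
  have hα : 1 + a / 2 ≠ 0 := fun h0 => ha1 (by linarith)
  have hαβ : 1 + 2 * (a / 2) - a / d ≠ 0 := by
    intro h0
    field_simp at h0
    exact ha2 (by linarith)
  have hσ : tensorSymbol (a / 2) (a / d) k h = 0 := by
    ext A B
    exact (tensorSymbol_apply_apply ..).trans (heq A B)
  exact (map_eq_zero_iff _
    (tensor_symbol_injective_general hα hαβ (dotProduct_self_eq_zero.not.mpr hk))).mp hσ
end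

section
/- Let d ≥ 2 be an integer and a a real number with a ≠ −2 and a·(d−1) ≠ −d. Let k ∈ ℝ^d be a nonzero vector and ξ ∈ ℝ^d. If for all indices B ∈ {1,…,d} one has a·( (1/2)‖k‖² ξ_B + ((d−2)/(2d))·⟨k, ξ⟩·k_B ) + ‖k‖² ξ_B = 0, then ξ = 0. (This is the principal-symbol injectivity establishing Lemma D.2 of the paper: the operator a·div₂∘C + Δ + c acting on vector fields on an (n−1)-dimensional manifold, d = n−1, is elliptic whenever a ∉ {−2, (1−n)/(n−2)}.) -/
/-!
Up to the factor `‖k‖²`, the symbol acts as `(a + 2) / 2` on the hyperplane orthogonal to `k` and as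
`(a (d - 1) + d) / d` on the line spanned by `k`. It is a scalar plus a multiple of the rank-one
operator `ξ ↦ ⟨k, ξ⟩ k`, so pairing with `k` isolates the second eigenvalue and forces
`⟨k, ξ⟩ = 0`; what is left is the first eigenvalue times `ξ`.
-/

theorem eq_zero_of_smul_add_apply_smul_eq_zero {R M : Type*} [CommRing R] [IsDomain R]
    [AddCommGroup M] [Module R M] [Module.IsTorsionFree R M] {c : R} (f : M →ₗ[R] R) {v x : M}
    (hc : c ≠ 0) (hcv : c + f v ≠ 0) (h : c • x + f x • v = 0) : x = 0 := by
  have hfx : f x = 0 := by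
    have hmul : (c + f v) * f x = 0 := calc
      (c + f v) * f x = f (c • x + f x • v) := by
        simp only [map_add, map_smul, smul_eq_mul]
        ring
      _ = 0 := by rw [h, map_zero]
    exact (mul_eq_zero.mp hmul).resolve_left hcv
  have hcx : c • x = 0 := by simpa only [hfx, zero_smul, add_zero] using h
  exact (smul_eq_zero.mp hcx).resolve_left hc

theorem vector_symbol_injective_general {K V : Type*} [Field K] [NeZero (2 : K)] [AddCommGroup V]
    [Module K V] (g : LinearMap.BilinForm K V) {a d : K} (hd : d ≠ 0) (ha1 : a ≠ -2)
    (ha2 : a * (d - 1) ≠ -d) {k ξ : V} (hk : g k k ≠ 0)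
    (heq : a • ((1 / 2 * g k k) • ξ + ((d - 2) / (2 * d) * g k ξ) • k) + g k k • ξ = 0) :
    ξ = 0 := by
  have h2 : (2 : K) ≠ 0 := two_ne_zero
  let c : K := (a + 2) / 2 * g k k
  let b : K := a * ((d - 2) / (2 * d))
  have hc : c ≠ 0 := mul_ne_zero (div_ne_zero (mt eq_neg_of_add_eq_zero_left ha1) h2) hk
  have hcb : c + (b • g k) k ≠ 0 := by
    have hsum : c + (b • g k) k = (a * (d - 1) + d) / d * g k k := by
      simp only [c, b, LinearMap.smul_apply, smul_eq_mul]
      field_simp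
      ring
    rw [hsum]
    exact mul_ne_zero (div_ne_zero (mt eq_neg_of_add_eq_zero_left ha2) hd) hk
  have hsymbol : c • ξ + (b • g k) ξ • k = 0 := by
    rw [← heq]
    simp only [c, b, LinearMap.smul_apply, smul_eq_mul]
    match_scalars <;> field_simp
  exact eq_zero_of_smul_add_apply_smul_eq_zero (b • g k) hc hcb hsymbol

/-- Principal-symbol injectivity of Lemma D.2: for `a ∉ {-2, -d/(d-1)}`, a nonzero
covector `k` and a vector `ξ`, the vanishing of the symbol
`a((1/2)‖k‖² ξ_B + ((d-2)/(2d))⟨k,ξ⟩ k_B) + ‖k‖² ξ_B` forces `ξ = 0`. -/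
theorem vector_symbol_injective (d : ℕ) (hd : 2 ≤ d) (a : ℝ)
    (ha1 : a ≠ -2) (ha2 : a * ((d : ℝ) - 1) ≠ -(d : ℝ))
    (k ξ : Fin d → ℝ) (hk : k ≠ 0)
    (heq : ∀ B, a * ((1 / 2) * (∑ i, (k i) ^ 2) * ξ B
        + (((d : ℝ) - 2) / (2 * (d : ℝ))) * (∑ i, k i * ξ i) * k B)
        + (∑ i, (k i) ^ 2) * ξ B = 0) :
    ξ = 0 := by
  refine vector_symbol_injective_general (dotProductBilin ℝ ℝ)
    (Nat.cast_ne_zero.mpr (by lia)) ha1 ha2 (mt dotProduct_self_eq_zero.mp hk) (funext fun B ↦ ?_)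
  simpa [dotProduct, ← sq, mul_assoc, mul_add] using heq B
end

section
/- Let d ≥ 2 be an integer, k ∈ ℝ^d a vector, and φ ∈ ℝ. For a d × d real matrix X define its trace-free symmetric part TS(X)_{AB} := (1/2)(X_{AB} + X_{BA}) − (1/d)(Σ_C X_{CC})·δ_{AB}. Let T := TS(φ · k kᵀ) (so T_{CB} = φ(k_C k_B − (1/d)‖k‖² δ_{CB})) and let S := TS(k (Tk)ᵀ), where (Tk)_B = Σ_C T_{BC} k_C. Then Σ_{A,B} k_A k_B S_{AB} = ((d−1)/d)² ‖k‖⁶ φ. In particular, for k ≠ 0 the map φ ↦ Σ_{A,B} k_A k_B S_{AB} is injective. (This is the principal-symbol computation σ(k)(ξᵘ) = ((n−2)/(n−1))² |k|⁶ ξᵘ, with d = n−1, in the proof of Proposition E.4 of the paper, establishing ellipticity of div₁∘div₂∘P∘C∘D̊ and hence of div₁∘div₂∘Ľₙ.) -/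
/-- The trace-free symmetric part of a `d × d` real matrix `X`:
`TS(X)_{AB} = (1/2)(X_{AB} + X_{BA}) - (1/d)(∑_C X_{CC}) δ_{AB}`. -/
noncomputable def TS (d : ℕ) (X : Fin d → Fin d → ℝ) : Fin d → Fin d → ℝ :=
  fun A B => (1 / 2) * (X A B + X B A)
    - (1 / (d : ℝ)) * (∑ C, X C C) * (if A = B then 1 else 0)

/-
Pairing with `k ⊗ k` does not see the antisymmetric part of a matrix, so
`⟨k, TS(k wᵀ) k⟩ = (1 - 1/d) ‖k‖² ⟨k, w⟩` for every vector `w`. Taking `w = Tk` reduces the symbol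
to `⟨k, Tk⟩`, and since `T = TS(k (φk)ᵀ)` the same identity with `w = φk` evaluates that pairing.
-/

theorem sum_mul_mul_TS (d : ℕ) (X : Fin d → Fin d → ℝ) (v : Fin d → ℝ) :
    ∑ A, ∑ B, v A * v B * TS d X A B
      = ∑ A, ∑ B, v A * v B * X A B - 1 / (d : ℝ) * (∑ C, X C C) * ∑ A, v A ^ 2 := by
  have transpose_eq : ∑ A, ∑ B, v A * v B * X B A = ∑ A, ∑ B, v A * v B * X A B := by
    rw [Finset.sum_comm]
    simp only [mul_comm (v _) (v _)]
  have delta_eq : ∑ A, ∑ B, v A * v B * (if A = B then 1 else 0) = ∑ A, v A ^ 2 := by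
    simp only [mul_ite, mul_one, mul_zero, Finset.sum_ite_eq, Finset.mem_univ, if_true, sq]
  calc ∑ A, ∑ B, v A * v B * TS d X A B
      = 1 / 2 * (∑ A, ∑ B, v A * v B * X A B + ∑ A, ∑ B, v A * v B * X B A)
          - 1 / (d : ℝ) * (∑ C, X C C) * ∑ A, ∑ B, v A * v B * (if A = B then 1 else 0) := by
        simp only [TS]
        generalize ∑ C, X C C = traceX
        simp only [Finset.mul_sum, ← Finset.sum_add_distrib, ← Finset.sum_sub_distrib]
        exact Finset.sum_congr rfl fun A _ => Finset.sum_congr rfl fun B _ => by ring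
    _ = ∑ A, ∑ B, v A * v B * X A B - 1 / (d : ℝ) * (∑ C, X C C) * ∑ A, v A ^ 2 := by
        rw [transpose_eq, delta_eq]
        ring

theorem sum_mul_mul_TS_outer (d : ℕ) (k w : Fin d → ℝ) :
    ∑ A, ∑ B, k A * k B * TS d (fun A B => k A * w B) A B
      = (1 - 1 / (d : ℝ)) * (∑ A, k A ^ 2) * ∑ A, k A * w A := by
  have pairing_eq : ∑ A, ∑ B, k A * k B * (k A * w B) = (∑ A, k A ^ 2) * ∑ B, k B * w B := by
    rw [Finset.sum_mul_sum]
    exact Finset.sum_congr rfl fun A _ => Finset.sum_congr rfl fun B _ => by ring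
  rw [sum_mul_mul_TS, pairing_eq]
  ring

theorem symbol_div_div_P_C_D_eq (d : ℕ) (k : Fin d → ℝ) (φ : ℝ) :
    ∑ A, ∑ B, k A * k B *
        TS d (fun A B => k A * ∑ C, TS d (fun A B => φ * (k A * k B)) B C * k C) A B
      = (1 - 1 / (d : ℝ)) ^ 2 * (∑ i, k i ^ 2) ^ 3 * φ := by
  have pairing_eq : ∑ B, k B * ∑ C, TS d (fun A B => φ * (k A * k B)) B C * k C
      = (1 - 1 / (d : ℝ)) * (∑ i, k i ^ 2) * (φ * ∑ i, k i ^ 2) := by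
    calc ∑ B, k B * ∑ C, TS d (fun A B => φ * (k A * k B)) B C * k C
        = ∑ B, ∑ C, k B * k C * TS d (fun A B => k A * (φ * k B)) B C := by
          simp only [mul_left_comm φ, Finset.mul_sum, mul_assoc, mul_comm (TS _ _ _ _)]
      _ = (1 - 1 / (d : ℝ)) * (∑ i, k i ^ 2) * ∑ i, k i * (φ * k i) :=
          sum_mul_mul_TS_outer d k fun i => φ * k i
      _ = (1 - 1 / (d : ℝ)) * (∑ i, k i ^ 2) * (φ * ∑ i, k i ^ 2) := by
          simp only [mul_left_comm _ φ, ← Finset.mul_sum, sq]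
  rw [sum_mul_mul_TS_outer, pairing_eq]
  ring

/-- Principal-symbol computation of Proposition E.4: with `T = TS(φ k kᵀ)` and
`S = TS(k (Tk)ᵀ)`, one has `∑_{A,B} k_A k_B S_{AB} = ((d-1)/d)² ‖k‖⁶ φ`; in particular
for `k ≠ 0` the map `φ ↦ ∑_{A,B} k_A k_B S_{AB}` is injective. -/
theorem symbol_computation_div_div_P_C_D (d : ℕ) (hd : 2 ≤ d) (k : Fin d → ℝ) :
    (∀ φ : ℝ,
      ∑ A, ∑ B, k A * k B *
        (TS d (fun A' B' =>
          k A' * (∑ C, (TS d (fun A'' B'' => φ * (k A'' * k B''))) B' C * k C))) A B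
      = (((d : ℝ) - 1) / (d : ℝ)) ^ 2 * (∑ i, (k i) ^ 2) ^ 3 * φ)
    ∧ (k ≠ 0 → Function.Injective (fun φ : ℝ =>
      ∑ A, ∑ B, k A * k B *
        (TS d (fun A' B' =>
          k A' * (∑ C, (TS d (fun A'' B'' => φ * (k A'' * k B''))) B' C * k C))) A B)) := by
  have d_ne_zero : (d : ℝ) ≠ 0 := Nat.cast_ne_zero.mpr (by lia)
  have d_sub_one_ne_zero : (d : ℝ) - 1 ≠ 0 := sub_ne_zero.mpr (Nat.cast_ne_one.mpr (by lia))
  have one_sub_inv : 1 - 1 / (d : ℝ) = ((d : ℝ) - 1) / d := by rw [sub_div, div_self d_ne_zero]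
  simp only [symbol_div_div_P_C_D_eq, one_sub_inv, implies_true, true_and]
  intro k_ne_zero
  have normSq_ne_zero : ∑ i, k i ^ 2 ≠ 0 := by
    simpa only [dotProduct, ← sq] using dotProduct_self_eq_zero.not.mpr k_ne_zero
  exact mul_right_injective₀ (mul_ne_zero
    (pow_ne_zero 2 (div_ne_zero d_sub_one_ne_zero d_ne_zero)) (pow_ne_zero 3 normSq_ne_zero))
end

section
/- Let d ≥ 2 be an integer with d ≠ 3. Let k ∈ ℝ^d be a nonzero vector and ξ ∈ ℝ^d. Define TS(k, ξ)_{AB} := (1/2)(k_A ξ_B + k_B ξ_A) − (1/d)·⟨k, ξ⟩·δ_{AB}. If for all indices B ∈ {1,…,d} one has ‖k‖⁴ · Σ_A k_A TS(k, ξ)_{AB} − (2(d−2)/(d−1)) · ‖k‖² · ( Σ_{C,D} k_C k_D TS(k, ξ)_{CD} ) · k_B = 0, then ξ = 0. (This is the principal-symbol injectivity computation (26VIII23.2)–(26VIII23.3) in the proof of Proposition E.5 of the paper, with d = n−1 and n ≠ 4, establishing ellipticity of the operator (L_n)† ∘ C on vector fields.) -/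
/-- The trace-free symmetric part of `k ξᵀ`:
`TS(k,ξ)_{AB} = (1/2)(k_A ξ_B + k_B ξ_A) - (1/d)⟨k,ξ⟩ δ_{AB}`. -/
noncomputable def TSv (d : ℕ) (k ξ : Fin d → ℝ) (A B : Fin d) : ℝ :=
  (1 / 2) * (k A * ξ B + k B * ξ A)
    - (1 / (d : ℝ)) * (∑ i, k i * ξ i) * (if A = B then 1 else 0)

/-!
Write `S = ‖k‖²`, `T = TS(k, ξ)`, `v = Tk`, and let `c` be the numerical coefficient of the symbol.
The hypothesis is `S² v = c S ⟨k, v⟩ k`, while the definition of `T` gives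
`Tk = (S / 2) ξ - (1/d - 1/2) ⟨k, ξ⟩ k`. Both have the form `a w = f(w) u` with `f` linear, and
applying `f` shows that such an equation forces `w = 0` as soon as `a ≠ 0` and `a ≠ f(u)`. In the
first equation `a - f(u) = S² (1 - c)`, so `v = 0`; in the second, with `v = 0`,
`a - f(u) = S (1 - 1/d)`, so `ξ = 0`. The coefficient `c = 2(d-2)/(d-1)` equals `1`
exactly when `d = 3`.
-/

open Matrix

lemma eq_zero_of_smul_eq_dual_apply_smul {R M : Type*} [CommRing R] [IsDomain R] [AddCommGroup M]
    [Module R M] [Module.IsTorsionFree R M] {f : Module.Dual R M} {u v : M} {a : R}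
    (ha : a ≠ 0) (hau : a ≠ f u) (h : a • v = f v • u) : v = 0 := by
  have happly : a * f v = f v * f u := by simpa using congrArg f h
  have hfactor : (a - f u) * f v = 0 := by linear_combination happly
  have hfv : f v = 0 := (mul_eq_zero.mp hfactor).resolve_left (sub_ne_zero.mpr hau)
  simpa [hfv, ha] using h

lemma dotProduct_vecMul_eq_sum_sum {R m : Type*} [CommSemiring R] [Fintype m] (v : m → R)
    (M : Matrix m m R) : v ⬝ᵥ v ᵥ* M = ∑ i, ∑ j, v i * v j * M i j := by
  rw [dotProduct_comm, ← dotProduct_mulVec]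
  simp only [dotProduct, mulVec, Finset.mul_sum, mul_assoc, mul_comm (M _ _)]

section TSv

variable {d : ℕ} (k ξ : Fin d → ℝ)

lemma of_TSv_eq : of (TSv d k ξ) =
    (1 / 2 : ℝ) • (vecMulVec k ξ + vecMulVec ξ k) - (1 / (d : ℝ) * (k ⬝ᵥ ξ)) • 1 := by
  ext A B
  simp [TSv, vecMulVec_apply, one_apply, dotProduct, mul_add, mul_comm (ξ A)]

lemma vecMul_of_TSv : k ᵥ* of (TSv d k ξ) =
    (k ⬝ᵥ k / 2) • ξ - ((1 / (d : ℝ) - 1 / 2) * (k ⬝ᵥ ξ)) • k := by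
  simp only [of_TSv_eq, vecMul_sub, vecMul_smul, vecMul_add, vecMul_vecMulVec, vecMul_one]
  module

variable {k ξ}

lemma eq_zero_of_vecMul_of_TSv_eq_zero (hd : d ≠ 1) (hk : k ≠ 0)
    (h : k ᵥ* of (TSv d k ξ) = 0) : ξ = 0 := by
  have hS : k ⬝ᵥ k ≠ 0 := dotProduct_self_eq_zero.not.mpr hk
  have htrace : 1 - 1 / (d : ℝ) ≠ 0 := sub_ne_zero.mpr (by simpa [eq_comm] using hd)
  rw [vecMul_of_TSv, sub_eq_zero] at h
  refine eq_zero_of_smul_eq_dual_apply_smul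
    (f := (1 / (d : ℝ) - 1 / 2) • dotProductEquiv ℝ (Fin d) k) (div_ne_zero hS two_ne_zero) ?_ h
  suffices k ⬝ᵥ k / 2 - (1 / (d : ℝ) - 1 / 2) * (k ⬝ᵥ k) ≠ 0 from sub_ne_zero.mp this
  convert mul_ne_zero hS htrace using 1
  ring

end TSv

theorem Ln_adjoint_symbol_injective_general (d : ℕ) (hd : d ≠ 1) (c : ℝ) (hc : c ≠ 1)
    (k ξ : Fin d → ℝ) (hk : k ≠ 0)
    (heq : ∀ B, (∑ i, (k i) ^ 2) ^ 2 * (∑ A, k A * TSv d k ξ A B)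
        - c * (∑ i, (k i) ^ 2) * (∑ C, ∑ E, k C * k E * TSv d k ξ C E) * k B = 0) :
    ξ = 0 := by
  have hS : k ⬝ᵥ k ≠ 0 := dotProduct_self_eq_zero.not.mpr hk
  have hS_sum : ∑ i, k i ^ 2 = k ⬝ᵥ k := by simp only [dotProduct, sq]
  have hsymbol : (k ⬝ᵥ k) ^ 2 • (k ᵥ* of (TSv d k ξ)) =
      (c * (k ⬝ᵥ k) * (k ⬝ᵥ k ᵥ* of (TSv d k ξ))) • k := by
    ext B
    rw [dotProduct_vecMul_eq_sum_sum, ← hS_sum]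
    exact sub_eq_zero.mp (heq B)
  refine eq_zero_of_vecMul_of_TSv_eq_zero hd hk <| eq_zero_of_smul_eq_dual_apply_smul
    (f := (c * (k ⬝ᵥ k)) • dotProductEquiv ℝ (Fin d) k) (pow_ne_zero 2 hS) ?_ hsymbol
  suffices (k ⬝ᵥ k) ^ 2 - c * (k ⬝ᵥ k) * (k ⬝ᵥ k) ≠ 0 from sub_ne_zero.mp this
  convert mul_ne_zero (pow_ne_zero 2 hS) (sub_ne_zero.mpr hc.symm) using 1
  ring

lemma two_mul_sub_two_div_sub_one_ne_one {x : ℝ} (hx1 : x ≠ 1) (hx3 : x ≠ 3) :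
    2 * (x - 2) / (x - 1) ≠ 1 := by
  rw [Ne, div_eq_one_iff_eq (sub_ne_zero.mpr hx1)]
  exact fun h => hx3 (by linear_combination h)

/-- Principal-symbol injectivity in the proof of Proposition E.5: for `d ≠ 3` and a
nonzero covector `k`, the vanishing of
`‖k‖⁴ ∑_A k_A TS(k,ξ)_{AB} - (2(d-2)/(d-1)) ‖k‖² (∑_{C,D} k_C k_D TS(k,ξ)_{CD}) k_B`
forces `ξ = 0`. -/
theorem Ln_adjoint_symbol_injective (d : ℕ) (hd : 2 ≤ d) (hd3 : d ≠ 3)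
    (k ξ : Fin d → ℝ) (hk : k ≠ 0)
    (heq : ∀ B, (∑ i, (k i) ^ 2) ^ 2 * (∑ A, k A * TSv d k ξ A B)
        - (2 * ((d : ℝ) - 2) / ((d : ℝ) - 1)) * (∑ i, (k i) ^ 2) *
          (∑ C, ∑ E, k C * k E * TSv d k ξ C E) * k B = 0) :
    ξ = 0 := by
  have hd1 : d ≠ 1 := by lia
  exact Ln_adjoint_symbol_injective_general d hd1 _
    (two_mul_sub_two_div_sub_one_ne_one (mod_cast hd1) (mod_cast hd3)) k ξ hk heq
end

section
/- For all real numbers n, i, P, Δ, R, ε with i ≠ 0, i ≠ 1, n + 1 − 2i ≠ 0 and n − 1 + 2i ≠ 0, the following identity holds: 𝒦_{(n−5−2i)/2} · K^α_{(n−7−2i)/2} = 𝒦_{(n−7+2i)/2} · K^α_{(n−9+2i)/2}, where for a real number k (with nonvanishing denominators) 𝒦_k := −(7 − n + 2k)⁻¹ · ( 2(n−1)P / ((3+k)(3−n+k)) + 2R + Δ − (n−4−k)(2+k)ε ) and K^α_k := (k+4)(n−k−4)/(n−7−2k). (This is identity (5III23.11) of the paper, defining the operator 𝒦̂(2i, P)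 and enabling the cancellation (5III23.10) in the recursion for the fields q⁽ⁱ⁾.) -/
/-- The coefficient operator `𝒦_k(Δ, P)` of (6III23.w3)/(3III23.5a), with the commuting
operator arguments `P, Δ, R` and the curvature constant `ε` treated as real numbers. -/
noncomputable def Kop (n P Δ R ε k : ℝ) : ℝ :=
  -(7 - n + 2 * k)⁻¹ *
    (2 * (n - 1) * P / ((3 + k) * (3 - n + k)) + 2 * R + Δ - (n - 4 - k) * (2 + k) * ε)

/-- The constant `K^α_k` of (6III23.w5)/(3III23.5b). -/
noncomputable def Kalpha (n k : ℝ) : ℝ := (k + 4) * (n - k - 4) / (n - 7 - 2 * k)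

/-!
The indices `k` of the two `𝒦`-factors add up to `n - 6`, so they are exchanged by the reflection
`k ↦ n - 6 - k`, and in both products `K^α` is taken at `k - 1`. In `𝒦_k K^α_{k-1}` the reflection
swaps the two linear denominators `7 - n + 2k` and `n - 5 - 2k`, and it preserves both the bracket
of `𝒦_k` and the numerator of `K^α_{k-1}`.
-/

/-- The bracketed factor of `𝒦_k`, that is `-(7 - n + 2k) 𝒦_k` when `7 - n + 2k ≠ 0`; it is
isolated because, unlike `𝒦_k` itself, it is invariant under the reflection `k ↦ n - 6 - k`. -/
noncomputable def kopBracket (n P Δ R ε k : ℝ) : ℝ :=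
  2 * (n - 1) * P / ((3 + k) * (3 - n + k)) + 2 * R + Δ - (n - 4 - k) * (2 + k) * ε

theorem kopBracket_reflect (n P Δ R ε k : ℝ) :
    kopBracket n P Δ R ε (n - 6 - k) = kopBracket n P Δ R ε k := by
  have denominator_reflect :
      (3 + (n - 6 - k)) * (3 - n + (n - 6 - k)) = (3 + k) * (3 - n + k) := by ring
  have curvature_reflect :
      (n - 4 - (n - 6 - k)) * (2 + (n - 6 - k)) = (n - 4 - k) * (2 + k) := by ring
  rw [kopBracket, denominator_reflect, curvature_reflect, kopBracket]

theorem kop_mul_kalpha_sub_one (n P Δ R ε k : ℝ) :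
    Kop n P Δ R ε k * Kalpha n (k - 1) =
      -(kopBracket n P Δ R ε k * ((k + 3) * (n - 3 - k))) /
        ((7 - n + 2 * k) * (n - 5 - 2 * k)) := by
  have kop_eq : Kop n P Δ R ε k = -kopBracket n P Δ R ε k / (7 - n + 2 * k) := by
    rw [Kop, ← kopBracket, neg_mul, inv_mul_eq_div, neg_div]
  have kalpha_eq : Kalpha n (k - 1) = (k + 3) * (n - 3 - k) / (n - 5 - 2 * k) := by
    rw [Kalpha]
    congr 1 <;> ring
  rw [kop_eq, kalpha_eq, div_mul_div_comm, neg_mul]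

theorem kop_mul_kalpha_sub_one_reflect (n P Δ R ε k : ℝ) :
    Kop n P Δ R ε (n - 6 - k) * Kalpha n (n - 6 - k - 1) =
      Kop n P Δ R ε k * Kalpha n (k - 1) := by
  have numerator_reflect :
      (n - 6 - k + 3) * (n - 3 - (n - 6 - k)) = (k + 3) * (n - 3 - k) := by ring
  have denominator_reflect :
      (7 - n + 2 * (n - 6 - k)) * (n - 5 - 2 * (n - 6 - k)) =
        (7 - n + 2 * k) * (n - 5 - 2 * k) := by ring
  rw [kop_mul_kalpha_sub_one, kop_mul_kalpha_sub_one, kopBracket_reflect, numerator_reflect,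
    denominator_reflect]

/-- Identity (5III23.11) of the paper: the two factorizations defining `𝒦̂(2i, P)`
agree, `𝒦_{(n-5-2i)/2} K^α_{(n-7-2i)/2} = 𝒦_{(n-7+2i)/2} K^α_{(n-9+2i)/2}`. -/
theorem Khat_identity (n i P Δ R ε : ℝ)
    (hi0 : i ≠ 0) (hi1 : i ≠ 1)
    (h1 : n + 1 - 2 * i ≠ 0) (h2 : n - 1 + 2 * i ≠ 0) :
    Kop n P Δ R ε ((n - 5 - 2 * i) / 2) * Kalpha n ((n - 7 - 2 * i) / 2)
      = Kop n P Δ R ε ((n - 7 + 2 * i) / 2) * Kalpha n ((n - 9 + 2 * i) / 2) := by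
  have reflect_index : (n - 5 - 2 * i) / 2 = n - 6 - (n - 7 + 2 * i) / 2 := by ring
  have left_pred : (n - 7 - 2 * i) / 2 = n - 6 - (n - 7 + 2 * i) / 2 - 1 := by ring
  have right_pred : (n - 9 + 2 * i) / 2 = (n - 7 + 2 * i) / 2 - 1 := by ring
  rw [reflect_index, left_pred, right_pred]
  exact kop_mul_kalpha_sub_one_reflect n P Δ R ε ((n - 7 + 2 * i) / 2)
end
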